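/- Let f: ℝ^d → ℝ be L₀-Lipschitz with respect to the Euclidean norm. Then its Gaussian smoothing f_δ(x) = E_{u ~ N(0, I_d)}[f(x + δu)] is differentiable with L₁-Lipschitz gradient for L₁ = √d L₀ / δ. -/

import Mathlib

open MeasureTheory ProbabilityTheory

noncomputable def stdGaussian (d : ℕ) : Measure (EuclideanSpace ℝ (Fin d)) :=
  (Measure.pi fun _ : Fin d => gaussianReal 0 1).map
    ⇑(EuclideanSpace.equiv (Fin d) ℝ).symm

lemma sg_eq (d : ℕ) :
    _root_.stdGaussian d = ProbabilityTheory.stdGaussian (EuclideanSpace ℝ (Fin d)) := by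
  rw [← map_pi_eq_stdGaussian]; rfl

instance sg_gaussian (d : ℕ) : IsGaussian (_root_.stdGaussian d) := by
  rw [sg_eq]; infer_instance

lemma sg_exp_integrable (d : ℕ) (k : ℝ) :
    Integrable (fun u => Real.exp (k * ‖u‖)) (_root_.stdGaussian d) := by
  obtain ⟨C, hC, hi⟩ := IsGaussian.exists_integrable_exp_sq (_root_.stdGaussian d)
  refine (hi.const_mul (Real.exp (k ^ 2 / (4 * C)))).mono' (by fun_prop) (ae_of_all _ fun u => ?_)
  rw [Real.norm_of_nonneg (Real.exp_nonneg _), ← Real.exp_add, Real.exp_le_exp]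
  have : k ^ 2 / (4 * C) + C * ‖u‖ ^ 2 - k * ‖u‖ = (2 * C * ‖u‖ - k) ^ 2 / (4 * C) := by
    field_simp; ring
  have h2 : 0 ≤ (2 * C * ‖u‖ - k) ^ 2 / (4 * C) := by positivity
  linarith

lemma sg_cmgf (d : ℕ) (h t : EuclideanSpace ℝ (Fin d)) :
    ∫ u, Complex.exp ((inner ℝ h u : ℝ) + (inner ℝ u t : ℝ) * Complex.I) ∂(_root_.stdGaussian d)
      = Complex.exp (((‖h‖ ^ 2 / 2 : ℝ) : ℂ) - ((‖t‖ ^ 2 / 2 : ℝ) : ℂ)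
          + (inner ℝ h t : ℝ) * Complex.I) := by
  unfold _root_.stdGaussian
  rw [integral_map (by fun_prop) (Measurable.aestronglyMeasurable (by fun_prop))]
  have key : ∀ v : Fin d → ℝ,
      Complex.exp ((inner ℝ h ((EuclideanSpace.equiv (Fin d) ℝ).symm v) : ℝ)
        + (inner ℝ ((EuclideanSpace.equiv (Fin d) ℝ).symm v) t : ℝ) * Complex.I)
      = ∏ i, Complex.exp (((h i : ℂ) + t i * Complex.I) * (v i : ℂ)) := by
    intro v
    rw [← Complex.exp_sum]
    congr 1
    simp only [PiLp.inner_apply]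
    push_cast
    rw [Finset.sum_mul, ← Finset.sum_add_distrib]
    refine Finset.sum_congr rfl fun i _ => ?_
    simp
    ring
  simp_rw [key]
  rw [integral_fintype_prod_eq_prod
    (f := fun i (x : ℝ) => Complex.exp (((h i : ℂ) + t i * Complex.I) * (x : ℂ)))]
  have h1 : ∀ z : ℂ, ∫ x : ℝ, Complex.exp (z * x) ∂(gaussianReal 0 1) = Complex.exp (z ^ 2 / 2) := by
    intro z
    have := complexMGF_id_gaussianReal (μ := 0) (v := 1) z
    simpa [complexMGF] using this
  simp_rw [h1]
  rw [← Complex.exp_sum]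
  congr 1
  rw [EuclideanSpace.real_norm_sq_eq, EuclideanSpace.real_norm_sq_eq]
  simp only [PiLp.inner_apply]
  push_cast
  rw [Finset.sum_mul, Finset.sum_div, Finset.sum_div, ← Finset.sum_sub_distrib,
    ← Finset.sum_add_distrib]
  refine Finset.sum_congr rfl fun i _ => ?_
  simp
  linear_combination (t i : ℂ) ^ 2 / 2 * Complex.I_sq

lemma sg_mgf (d : ℕ) (h : EuclideanSpace ℝ (Fin d)) :
    ∫ u, Real.exp (inner ℝ h u) ∂(_root_.stdGaussian d) = Real.exp (‖h‖ ^ 2 / 2) := by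
  have := sg_cmgf d h 0
  simp only [inner_zero_right, norm_zero] at this
  norm_num at this
  have h2 : ∀ u : EuclideanSpace ℝ (Fin d), Complex.exp ((inner ℝ h u : ℝ) : ℂ)
    = ((Real.exp (inner ℝ h u) : ℝ) : ℂ) := fun u => by push_cast; rfl
  simp_rw [h2] at this
  rw [integral_complex_ofReal] at this
  apply Complex.ofReal_injective
  rw [Complex.ofReal_exp]
  push_cast
  exact this

lemma sg_inner_exp_integrable (d : ℕ) (h : EuclideanSpace ℝ (Fin d)) :
    Integrable (fun u => Real.exp (inner ℝ h u)) (_root_.stdGaussian d) := by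
  refine (sg_exp_integrable d ‖h‖).mono' (by fun_prop) (ae_of_all _ fun u => ?_)
  rw [Real.norm_of_nonneg (Real.exp_nonneg _), Real.exp_le_exp]
  exact real_inner_le_norm h u

lemma sg_shift (d : ℕ) (h : EuclideanSpace ℝ (Fin d)) :
    (_root_.stdGaussian d).map (fun u => u + h)
      = (_root_.stdGaussian d).tilted (fun u => inner ℝ h u) := by
  have : IsProbabilityMeasure ((_root_.stdGaussian d).tilted (fun u => inner ℝ h u)) :=
    isProbabilityMeasure_tilted (sg_inner_exp_integrable d h)
  have : IsProbabilityMeasure ((_root_.stdGaussian d).map (fun u => u + h)) :=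
    Measure.isProbabilityMeasure_map (by fun_prop)
  apply Measure.ext_of_charFun
  ext t
  rw [charFun_map_add_const, charFun_apply (μ := Measure.tilted _ _), integral_tilted, sg_mgf]
  have h2 : ∀ u : EuclideanSpace ℝ (Fin d),
      (Real.exp (inner ℝ h u) / Real.exp (‖h‖ ^ 2 / 2)) • Complex.exp ((inner ℝ u t : ℝ) * Complex.I)
      = Complex.exp (-((‖h‖ ^ 2 / 2 : ℝ) : ℂ)) *
        Complex.exp ((inner ℝ h u : ℝ) + (inner ℝ u t : ℝ) * Complex.I) := by
    intro u
    rw [← Real.exp_sub, Complex.real_smul, Complex.ofReal_exp, ← Complex.exp_add,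
      ← Complex.exp_add]
    congr 1
    push_cast
    ring
  simp_rw [h2]
  rw [integral_const_mul, sg_cmgf, sg_eq, charFun_stdGaussian, ← Complex.exp_add,
    ← Complex.exp_add]
  congr 1
  push_cast
  ring

lemma sg_shift_integral (d : ℕ) (h : EuclideanSpace ℝ (Fin d))
    (W : EuclideanSpace ℝ (Fin d) → ℝ) (hW : Continuous W) :
    ∫ u, W (u + h) ∂(_root_.stdGaussian d)
      = ∫ u, W u * Real.exp (inner ℝ h u - ‖h‖ ^ 2 / 2) ∂(_root_.stdGaussian d) := by
  have := integral_map (μ := _root_.stdGaussian d) (φ := fun u => u + h) (by fun_prop)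
    (f := W) hW.aestronglyMeasurable
  rw [← this, sg_shift, integral_tilted, sg_mgf]
  simp only [Real.exp_sub, smul_eq_mul, mul_comm]

lemma sg_hasGradientAt (d : ℕ) (W : EuclideanSpace ℝ (Fin d) → ℝ) (hW : Continuous W)
    (A : ℝ) (hA : 0 ≤ A) (hb : ∀ u, |W u| ≤ A * Real.exp ‖u‖) :
    HasFDerivAt (fun h => ∫ u, W (u + h) ∂(_root_.stdGaussian d))
      (innerSL ℝ (∫ u, W u • u ∂(_root_.stdGaussian d))) 0 := by
  have hWu : Integrable (fun u => W u • u) (_root_.stdGaussian d) := by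
    refine ((sg_exp_integrable d 2).const_mul A).mono' (by fun_prop) (ae_of_all _ fun u => ?_)
    rw [norm_smul, Real.norm_eq_abs, two_mul, Real.exp_add, ← mul_assoc]
    have := Real.add_one_le_exp ‖u‖
    exact mul_le_mul (hb u) (by linarith) (norm_nonneg _) (by positivity)
  rw [← ContinuousLinearMap.integral_comp_comm _ hWu]
  simp_rw [sg_shift_integral d _ W hW]
  have hd : ∀ (h u : EuclideanSpace ℝ (Fin d)),
      HasFDerivAt (fun h => W u * Real.exp (inner ℝ h u - ‖h‖ ^ 2 / 2))
        ((W u * Real.exp (inner ℝ h u - ‖h‖ ^ 2 / 2)) • innerSL ℝ (u - h)) h := by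
    intro h u
    have h1 : HasFDerivAt (fun h : EuclideanSpace ℝ (Fin d) => (inner ℝ h u : ℝ)) (innerSL ℝ u) h := by
      have := (innerSL ℝ u).hasFDerivAt (x := h)
      refine this.congr_of_eventuallyEq (Filter.Eventually.of_forall fun y => ?_)
      simp [real_inner_comm]
    have h2 := (hasStrictFDerivAt_norm_sq h).hasFDerivAt
    have h3 := ((h1.sub (h2.mul_const (1 / 2 : ℝ))).exp).const_mul (W u)
    refine (h3.congr_of_eventuallyEq (Filter.Eventually.of_forall fun y => ?_)).congr_fderiv ?_
    · simp [div_eq_mul_inv]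
    · ext v
      simp [div_eq_mul_inv]
      ring
  have key := hasFDerivAt_integral_of_dominated_of_fderiv_le (𝕜 := ℝ)
    (μ := _root_.stdGaussian d) (x₀ := (0 : EuclideanSpace ℝ (Fin d)))
    (F := fun h u => W u * Real.exp (inner ℝ h u - ‖h‖ ^ 2 / 2))
    (F' := fun h u => (W u * Real.exp (inner ℝ h u - ‖h‖ ^ 2 / 2)) • innerSL ℝ (u - h))
    (s := Metric.ball 0 1) (bound := fun u => A * Real.exp (3 * ‖u‖))
    (Metric.ball_mem_nhds _ one_pos)
    (Filter.Eventually.of_forall fun h => by fun_prop)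
    (by
      refine ((sg_exp_integrable d 1).const_mul A).mono' (by fun_prop) (ae_of_all _ fun u => ?_)
      simpa using hb u)
    (by fun_prop)
    (ae_of_all _ fun u h hh => by
      rw [mem_ball_zero_iff] at hh
      rw [norm_smul, innerSL_apply_norm, norm_mul, Real.norm_eq_abs,
        Real.norm_of_nonneg (Real.exp_nonneg _)]
      have e : A * Real.exp (3 * ‖u‖) = A * Real.exp ‖u‖ * Real.exp ‖u‖ * Real.exp ‖u‖ := by
        rw [mul_assoc, mul_assoc, ← Real.exp_add, ← Real.exp_add]; ring_nf
      rw [e]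
      have h1 : inner ℝ h u - ‖h‖ ^ 2 / 2 ≤ ‖u‖ := by
        have := real_inner_le_norm h u
        nlinarith [norm_nonneg u, norm_nonneg h, sq_nonneg ‖h‖]
      have h2 := norm_sub_le u h
      have h3 := Real.add_one_le_exp ‖u‖
      exact mul_le_mul (mul_le_mul (hb u) (Real.exp_le_exp.2 h1) (by positivity) (by positivity))
        (by linarith) (norm_nonneg _) (by positivity))
    ((sg_exp_integrable d 3).const_mul A)
    (ae_of_all _ fun u h _ => hd h u)
  simpa using key

lemma sg_norm_sq (d : ℕ) : ∫ u, ‖u‖ ^ 2 ∂(_root_.stdGaussian d) = d := by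
  unfold _root_.stdGaussian
  rw [integral_map (by fun_prop) (by fun_prop)]
  simp_rw [EuclideanSpace.real_norm_sq_eq]
  have hm : MemLp (fun x : ℝ => x) 2 (gaussianReal 0 1) := memLp_id_gaussianReal 2
  have hi : Integrable (fun x : ℝ => x ^ 2) (gaussianReal 0 1) := hm.integrable_sq
  have e : ∫ x, x ^ 2 ∂(gaussianReal 0 1) = 1 := by
    have h1 := variance_eq_sub hm
    rw [variance_fun_id_gaussianReal] at h1
    simpa using h1.symm
  have e2 : ∀ i : Fin d, ∫ v : Fin d → ℝ, (v i) ^ 2 ∂(Measure.pi fun _ : Fin d => gaussianReal 0 1)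
      = 1 := fun i => by
    rw [← e]
    exact integral_comp_eval (μ := fun _ : Fin d => gaussianReal 0 1) (i := i)
      (f := fun x : ℝ => x ^ 2) hi.aestronglyMeasurable
  have hs : ∫ v : Fin d → ℝ, ∑ i, (v i) ^ 2 ∂(Measure.pi fun _ : Fin d => gaussianReal 0 1) = d := by
    rw [integral_finsetSum]
    · simp [e2]
    · intro i _
      exact integrable_comp_eval (μ := fun _ : Fin d => gaussianReal 0 1) (i := i)
        (f := fun x : ℝ => x ^ 2) hi
  exact hs

lemma sg_norm (d : ℕ) : ∫ u, ‖u‖ ∂(_root_.stdGaussian d) ≤ Real.sqrt d := by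
  have hm : MemLp (fun u => ‖u‖) 2 (_root_.stdGaussian d) :=
    (IsGaussian.memLp_two_fun_id (μ := _root_.stdGaussian d)).norm
  have h1 := variance_eq_sub hm
  have h2 := variance_nonneg (fun u => ‖u‖) (_root_.stdGaussian d)
  apply Real.le_sqrt_of_sq_le
  have h3 := sg_norm_sq d
  simp only [Pi.pow_apply] at h1
  linarith

theorem gaussian_smoothing_gradient_lipschitz
    (d : ℕ) (f : EuclideanSpace ℝ (Fin d) → ℝ) (L₀ δ : ℝ) (hδ : 0 < δ) (hL₀ : 0 ≤ L₀)
    (hf : ∀ x y, |f x - f y| ≤ L₀ * ‖x - y‖) :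
    Differentiable ℝ (fun x => ∫ u, f (x + δ • u) ∂(stdGaussian d)) ∧
      ∀ x y, ‖gradient (fun x => ∫ u, f (x + δ • u) ∂(stdGaussian d)) x -
          gradient (fun x => ∫ u, f (x + δ • u) ∂(stdGaussian d)) y‖ ≤
        Real.sqrt d * L₀ / δ * ‖x - y‖ := by
  have hfc : Continuous f := by
    have : LipschitzWith ⟨L₀, hL₀⟩ f := LipschitzWith.of_dist_le_mul fun x y => by
      rw [Real.dist_eq, dist_eq_norm]; exact hf x y
    exact this.continuous
  have hb : ∀ x u, |f (x + δ • u)| ≤ (|f x| + L₀ * δ) * Real.exp ‖u‖ := by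
    intro x u
    have h1 := hf (x + δ • u) x
    rw [add_sub_cancel_left, norm_smul, Real.norm_of_nonneg hδ.le] at h1
    have h2 := abs_sub_abs_le_abs_sub (f (x + δ • u)) (f x)
    have h3 := Real.add_one_le_exp ‖u‖
    have h4 := norm_nonneg u
    have h5 := mul_le_mul_of_nonneg_left (show (1:ℝ) ≤ Real.exp ‖u‖ by linarith) (abs_nonneg (f x))
    have h6 := mul_le_mul_of_nonneg_left (show ‖u‖ ≤ Real.exp ‖u‖ by linarith)
      (mul_nonneg hL₀ hδ.le)
    linarith
  have hint : ∀ x, Integrable (fun u => f (x + δ • u) • u) (_root_.stdGaussian d) := by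
    intro x
    refine ((sg_exp_integrable d 2).const_mul (|f x| + L₀ * δ)).mono' (by fun_prop)
      (ae_of_all _ fun u => ?_)
    rw [norm_smul, Real.norm_eq_abs, two_mul, Real.exp_add, ← mul_assoc]
    have := Real.add_one_le_exp ‖u‖
    exact mul_le_mul (hb x u) (by linarith) (norm_nonneg _) (by positivity)
  have hg : ∀ x, HasGradientAt (fun x => ∫ u, f (x + δ • u) ∂(_root_.stdGaussian d))
      (δ⁻¹ • ∫ u, f (x + δ • u) • u ∂(_root_.stdGaussian d)) x := by
    intro x
    rw [hasGradientAt_iff_hasFDerivAt]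
    have h1 := sg_hasGradientAt d (fun u => f (x + δ • u)) (by fun_prop) (|f x| + L₀ * δ)
      (by positivity) (hb x)
    have h2 : HasFDerivAt (fun y : EuclideanSpace ℝ (Fin d) => δ⁻¹ • (y - x))
        (δ⁻¹ • ContinuousLinearMap.id ℝ _) x :=
      ((hasFDerivAt_id x).sub_const x).const_smul δ⁻¹
    have h0 : δ⁻¹ • (x - x) = 0 := by simp
    rw [← h0] at h1
    have h3 := h1.comp x h2
    refine (h3.congr_of_eventuallyEq (Filter.Eventually.of_forall fun y => ?_)).congr_fderiv ?_
    · simp only [Function.comp]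
      congr 1
      ext u
      rw [smul_add, smul_smul, mul_inv_cancel₀ hδ.ne', one_smul]
      congr 1
      abel
    · ext v
      simp
  refine ⟨fun x => (hg x).differentiableAt, fun x y => ?_⟩
  rw [(hg x).gradient, (hg y).gradient, ← smul_sub, ← integral_sub (hint x) (hint y), norm_smul,
    Real.norm_of_nonneg (inv_nonneg.2 hδ.le)]
  have hn : Integrable (fun u => ‖u‖) (_root_.stdGaussian d) :=
    (IsGaussian.integrable_id (μ := _root_.stdGaussian d)).norm
  have h1 : ‖∫ u, (f (x + δ • u) • u - f (y + δ • u) • u) ∂(_root_.stdGaussian d)‖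
      ≤ ∫ u, L₀ * ‖x - y‖ * ‖u‖ ∂(_root_.stdGaussian d) := by
    refine norm_integral_le_of_norm_le (hn.const_mul _) (ae_of_all _ fun u => ?_)
    rw [← sub_smul, norm_smul, Real.norm_eq_abs]
    have := hf (x + δ • u) (y + δ • u)
    rw [add_sub_add_right_eq_sub] at this
    gcongr
  rw [integral_const_mul] at h1
  calc _ ≤ δ⁻¹ * (L₀ * ‖x - y‖ * Real.sqrt d) := by
        have := sg_norm d
        gcongr
        exact h1.trans (by gcongr)
    _ = _ := by field_simp
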